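/- arXiv:2007.04150 — 7 statements merged into one kernel-verified Lean document; each statement's English description precedes it below -/
import Mathlib

section
/- Let (S, →, ⪯) be a self-simulating transition system, I a reachability invariant, and φ a predicate compatible with the SSTS. If ¬φ(s) for all s ∈ I, and s₀ ∈ S is such that there exists s₀' ∈ I with s₀ ⪯ s₀', then there is no finite path s₀ → s₁ → ⋯ → sₙ in → with φ(sₙ). -/
/-- For an SSTS `(S, →, ⪯)`, a reachability invariant `I`,
and a compatible predicate `φ` with `¬φ(s)` for all `s ∈ I`:
if `s₀ ⪯ s₀'` for some `s₀' ∈ I`, there is no finite path from `s₀` ending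
in a state satisfying `φ`. -/
theorem reachability_certificate {S : Type*}
    (tr : S → S → Prop) (pre : S → S → Prop)
    (hrefl : ∀ s, pre s s)
    (htrans : ∀ a b c, pre a b → pre b c → pre a c)
    (hsim : ∀ s s' t, pre s s' → tr s t → ∃ t', tr s' t' ∧ pre t t')
    (I : Set S)
    (hinv : ∀ s ∈ I, ∀ t, tr s t → ∃ t' ∈ I, pre t t')
    (φ : S → Prop)
    (hcompat : ∀ s s', φ s → pre s s' → φ s')
    (hIφ : ∀ s ∈ I, ¬ φ s)
    (s₀ : S) (hs₀ : ∃ s₀' ∈ I, pre s₀ s₀') :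
    ¬ ∃ (n : ℕ) (s : ℕ → S), s 0 = s₀ ∧ (∀ i < n, tr (s i) (s (i + 1))) ∧
        φ (s n) := by
  rintro ⟨n, s, h0, hpath, hφ⟩
  -- Being dominated by an element of `I` propagates along the path.
  have key : ∀ i ≤ n, ∃ t ∈ I, pre (s i) t := by
    intro i
    induction i with
    | zero => intro _; rwa [h0]
    | succ k ih =>
      intro hk
      obtain ⟨u, huI, hu⟩ := ih (by omega)
      obtain ⟨v, huv, hv⟩ := hsim _ _ _ hu (hpath k (by omega))
      obtain ⟨w, hwI, hw⟩ := hinv u huI v huv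
      exact ⟨w, hwI, htrans _ _ _ hv hw⟩
  obtain ⟨t, htI, ht⟩ := key n le_rfl
  exact hIφ t htI (hcompat _ _ hφ ht)
end

section
/- Let (S, →, ⪯) be a self-simulating transition system and (I, ⊴) a restricted reachability invariant. If s₀ ⪯ t₀ with t₀ ∈ I, and (sᵢ)_{i∈ℕ} is an infinite run in →, then there exists an infinite run (tᵢ)_{i∈ℕ} in →_⊴ starting at t₀ such that sᵢ ⪯ tᵢ and tᵢ ∈ I for all i ∈ ℕ. -/
/-- For an SSTS `(S, →, ⪯)` and a restricted reachability
invariant `(I, ⊴)`: if `s₀ ⪯ t₀` with `t₀ ∈ I` and `(sᵢ)` is an infinite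
run in `→`, there is an infinite run `(tᵢ)` in `→_⊴` starting at `t₀`
with `sᵢ ⪯ tᵢ` and `tᵢ ∈ I` for all `i`. -/
theorem restricted_invariant_run_simulation {S : Type*}
    (tr : S → S → Prop) (pre : S → S → Prop) (le : S → S → Prop)
    (hrefl : ∀ s, pre s s)
    (htrans : ∀ a b c, pre a b → pre b c → pre a c)
    (hsim : ∀ s s' t, pre s s' → tr s t → ∃ t', tr s' t' ∧ pre t t')
    (I : Set S)
    (hinv1 : ∀ s ∈ I, ∀ t, tr s t → ∃ t' ∈ I, le t t')
    (hinv2 : ∀ s t, le s t → pre s t)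
    (s : ℕ → S) (hrun : ∀ i, tr (s i) (s (i + 1)))
    (t₀ : S) (ht₀ : t₀ ∈ I) (h₀ : pre (s 0) t₀) :
    ∃ t : ℕ → S, t 0 = t₀ ∧
      (∀ i, ∃ u, tr (t i) u ∧ le u (t (i + 1))) ∧
      ∀ i, pre (s i) (t i) ∧ t i ∈ I := by
  -- One step: simulate `s i → s (i + 1)` from `x`, then re-enter `I` along `⊴ ⊆ ⪯`.
  have step : ∀ (i : ℕ) (x : {x // pre (s i) x ∧ x ∈ I}),
      ∃ y : {y // pre (s (i + 1)) y ∧ y ∈ I}, ∃ u, tr x u ∧ le u y := by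
    rintro i ⟨x, hx, hxI⟩
    obtain ⟨u, hxu, hu⟩ := hsim _ _ _ hx (hrun i)
    obtain ⟨y, hyI, huy⟩ := hinv1 x hxI u hxu
    exact ⟨⟨y, htrans _ _ _ hu (hinv2 _ _ huy), hyI⟩, u, hxu, huy⟩
  choose next hnext using step
  -- Iterating the chosen step in the dependent family of admissible states gives the run.
  let t : (i : ℕ) → {x // pre (s i) x ∧ x ∈ I} := fun i =>
    Nat.rec ⟨t₀, h₀, ht₀⟩ (fun i x => next i x) i
  exact ⟨fun i => (t i).1, rfl, fun i => hnext i (t i), fun i => (t i).2⟩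
end

section
/- Let → be a transition system on S and φ a predicate on S. Suppose there is no s with φ(s) and s →⁺ s (where →⁺ is the transitive closure of →), and suppose that for every s the set A(s) := {x | s →* x ∧ φ(x)} is finite (where →* is the reflexive-transitive closure). Then the function f(s) := |A(s)| (the cardinality of A(s), as an integer) is a topological numbering of → and φ. -/
/-- If there is no accepting cycle (no `s` with `φ s` and
`s →⁺ s`) and for every `s` the set `A(s) = {x | s →* x ∧ φ x}` is finite,
then `f(s) := |A(s)|` is a topological numbering of `→` and `φ`. -/
theorem card_reachable_accepting_is_topological_numbering {S : Type*}
    (tr : S → S → Prop) (φ : S → Prop)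
    (hcyc : ¬ ∃ s, φ s ∧ Relation.TransGen tr s s)
    (hfin : ∀ s : S, {x | Relation.ReflTransGen tr s x ∧ φ x}.Finite) :
    (∀ s t, tr s t →
        ({x | Relation.ReflTransGen tr s x ∧ φ x}.ncard : ℤ) ≥
        ({x | Relation.ReflTransGen tr t x ∧ φ x}.ncard : ℤ)) ∧
    (∀ s t, tr s t → φ s →
        ({x | Relation.ReflTransGen tr s x ∧ φ x}.ncard : ℤ) >
        ({x | Relation.ReflTransGen tr t x ∧ φ x}.ncard : ℤ)) := by
  have hsub : ∀ s t, tr s t → {x | Relation.ReflTransGen tr t x ∧ φ x} ⊆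
      {x | Relation.ReflTransGen tr s x ∧ φ x} :=
    fun s t hst x hx => ⟨Relation.ReflTransGen.head hst hx.1, hx.2⟩
  refine ⟨fun s t hst => ?_, fun s t hst hs => ?_⟩
  · exact_mod_cast Set.ncard_le_ncard (hsub s t hst) (hfin s)
  · -- The inclusion is strict: `s` itself lies in `A(s)`, and `s ∈ A(t)` would close an
    -- accepting cycle `s → t →* s`.
    have hss : {x | Relation.ReflTransGen tr t x ∧ φ x} ⊂
        {x | Relation.ReflTransGen tr s x ∧ φ x} :=
      (Set.ssubset_iff_of_subset (hsub s t hst)).2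
        ⟨s, ⟨Relation.ReflTransGen.refl, hs⟩,
          fun h => hcyc ⟨s, hs, Relation.TransGen.head' hst h.1⟩⟩
    exact_mod_cast Set.ncard_lt_ncard hss (hfin s)
end

section
/- Let (S, →, ⪯) be a self-simulating transition system, φ a predicate compatible with the SSTS, (I, ⊴) a restricted reachability invariant with I finite, and f a restricted topological numbering of the SSTS with respect to (I, ⊴) and φ. Then for any s₀ ∈ S such that there exists t₀ ∈ I with s₀ ⪯ t₀, there is no Büchi run from s₀ in →, i.e., no infinite run s₀ → s₁ → ⋯ with φ(sᵢ) for infinitely many i. -/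
/-!
A run from `s₀` is shadowed by a sequence of elements of `I`: if `s i ⪯ t` with `t ∈ I`, the step
`s i → s (i + 1)` is simulated by some `t → u`, and the invariant gives `t' ∈ I` with `u ⊴ t'`, hence
`s (i + 1) ⪯ u ⪯ t'`. Along the shadow `f` never increases, and it strictly decreases at each `i`
with `φ (s i)`, since compatibility transfers `φ` to the shadow. On a Büchi run `f` would thus take
arbitrarily small values on `I`, contradicting the finiteness of `I`.
-/

/-- Let `(S, →, ⪯)` be an SSTS, `φ` a compatible predicate,
`(I, ⊴)` a restricted reachability invariant with `I` finite, and `f` a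
restricted topological numbering w.r.t. `(I, ⊴)` and `φ`. Then from any
`s₀` with `s₀ ⪯ t₀` for some `t₀ ∈ I` there is no Büchi run in `→`. -/
theorem no_buchi_run {S : Type*}
    (tr : S → S → Prop) (pre : S → S → Prop) (le : S → S → Prop)
    (hrefl : ∀ s, pre s s)
    (htrans : ∀ a b c, pre a b → pre b c → pre a c)
    (hsim : ∀ s s' t, pre s s' → tr s t → ∃ t', tr s' t' ∧ pre t t')
    (φ : S → Prop)
    (hcompat : ∀ s s', φ s → pre s s' → φ s')
    (I : Set S) (hIfin : I.Finite)
    (hinv1 : ∀ s ∈ I, ∀ t, tr s t → ∃ t' ∈ I, le t t')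
    (hinv2 : ∀ s t, le s t → pre s t)
    (f : S → ℤ)
    (hf1 : ∀ s ∈ I, ∀ t' ∈ I, ∀ t, tr s t → le t t' → f s ≥ f t')
    (hf2 : ∀ s ∈ I, ∀ t' ∈ I, ∀ t, tr s t → le t t' → φ s → f s > f t')
    (s₀ : S) (hs₀ : ∃ t₀ ∈ I, pre s₀ t₀) :
    ¬ ∃ s : ℕ → S, s 0 = s₀ ∧ (∀ i, tr (s i) (s (i + 1))) ∧
        ∀ n, ∃ i ≥ n, φ (s i) := by
  rintro ⟨s, hs0, hrun, hinf⟩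
  obtain ⟨t₀, ht₀, hpre₀⟩ := hs₀
  have step : ∀ i, ∀ t ∈ I, pre (s i) t →
      ∃ t' ∈ I, pre (s (i + 1)) t' ∧ f t' ≤ f t ∧ (φ (s i) → f t' < f t) := by
    intro i t ht hp
    obtain ⟨u, htu, hpu⟩ := hsim _ _ _ hp (hrun i)
    obtain ⟨t', ht', hle⟩ := hinv1 t ht u htu
    exact ⟨t', ht', htrans _ _ _ hpu (hinv2 _ _ hle), hf1 t ht t' ht' u htu hle,
      fun h => hf2 t ht t' ht' u htu hle (hcompat _ _ h hp)⟩
  have follow : ∀ i, ∀ t ∈ I, pre (s i) t → ∀ j ≥ i, ∃ t' ∈ I, pre (s j) t' ∧ f t' ≤ f t := by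
    intro i t ht hp j hj
    induction j, hj using Nat.le_induction with
    | base => exact ⟨t, ht, hp, le_rfl⟩
    | succ j _ ih =>
      obtain ⟨u, hu, hpu, hfu⟩ := ih
      obtain ⟨t', ht', hp', hf', -⟩ := step j u hu hpu
      exact ⟨t', ht', hp', hf'.trans hfu⟩
  have descend : ∀ n : ℕ, ∃ i, ∃ t ∈ I, pre (s i) t ∧ f t ≤ f t₀ - n := by
    intro n
    induction n with
    | zero => exact ⟨0, t₀, ht₀, hs0 ▸ hpre₀, by simp⟩
    | succ n ih =>
      obtain ⟨i, t, ht, hp, hft⟩ := ih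
      obtain ⟨j, hj, hφ⟩ := hinf i
      obtain ⟨u, hu, hpu, hfu⟩ := follow i t ht hp j hj
      obtain ⟨t', ht', hp', -, hlt⟩ := step j u hu hpu
      refine ⟨j + 1, t', ht', hp', ?_⟩
      have := hlt hφ
      push_cast
      lia
  obtain ⟨B, hB⟩ := (hIfin.image f).bddBelow
  -- This many strict decreases push `f` below its lower bound `B` on `I`.
  obtain ⟨i, t, ht, -, hft⟩ := descend (f t₀ - B + 1).toNat
  have := hB (Set.mem_image_of_mem f ht)
  lia
end

section
/- Let (S, →, ⪯) be a self-simulating transition system, φ a predicate on S, (I, ⊴) a restricted reachability invariant, and f a restricted topological numbering of the SSTS with respect to (I, ⊴) and φ. Define the relation ⤳ on S by s ⤳ t' iff s ∈ I, t' ∈ I, and there exists t with s → t and t ⊴ t'. Then ⤳ has no accepting cycles: if s ⤳ s₁ and s₁ ⤳* s (reflexive-transitive closure), then ¬φ(s). -/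
/-- Let `(S, →, ⪯)` be an SSTS, `(I, ⊴)` a restricted
reachability invariant, and `f` a restricted topological numbering w.r.t.
`(I, ⊴)` and `φ`. Define `s ⤳ t'` iff `s ∈ I`, `t' ∈ I`, and `∃ t, s → t ∧
t ⊴ t'`. Then `⤳` has no accepting cycles: `s ⤳ s₁ ⤳* s` implies `¬φ(s)`. -/
theorem restricted_numbering_no_accepting_cycle {S : Type*}
    (tr : S → S → Prop) (pre : S → S → Prop) (le : S → S → Prop)
    (hrefl : ∀ s, pre s s)
    (htrans : ∀ a b c, pre a b → pre b c → pre a c)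
    (hsim : ∀ s s' t, pre s s' → tr s t → ∃ t', tr s' t' ∧ pre t t')
    (φ : S → Prop)
    (I : Set S)
    (hinv1 : ∀ s ∈ I, ∀ t, tr s t → ∃ t' ∈ I, le t t')
    (hinv2 : ∀ s t, le s t → pre s t)
    (f : S → ℤ)
    (hf1 : ∀ s ∈ I, ∀ t' ∈ I, ∀ t, tr s t → le t t' → f s ≥ f t')
    (hf2 : ∀ s ∈ I, ∀ t' ∈ I, ∀ t, tr s t → le t t' → φ s → f s > f t') :
    ∀ s s₁ : S,
      (s ∈ I ∧ s₁ ∈ I ∧ ∃ t, tr s t ∧ le t s₁) →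
      Relation.ReflTransGen (fun a b => a ∈ I ∧ b ∈ I ∧ ∃ t, tr a t ∧ le t b) s₁ s →
      ¬ φ s := by
  rintro s s₁ ⟨hs, hs₁, t, hst, hts₁⟩ hpath hφ
  -- `f` is non-increasing along `⤳*`, so closing the cycle gives `f s ≤ f s₁`.
  have hle : f s ≤ f s₁ := by
    clear hφ hst hs
    induction hpath with
    | refl => exact le_rfl
    | tail _ hstep ih =>
      obtain ⟨hb, hc, u, hbu, huc⟩ := hstep
      exact (hf1 _ hb _ hc u hbu huc).trans ih
  -- The first step of the cycle would be strict if `s` were accepting.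
  exact absurd (hf2 s hs s₁ hs₁ t hst hts₁ hφ) (not_lt.mpr hle)
end

section
/- Let → be a transition system on S and →' a transition system on S', related by ∼ ⊆ S × S' such that: (simulation) s ∼ s' and s' →' t' imply there exists t with s → t and t ∼ t'; (condition 2) s ∼ s', t ∼ t', and s' ⊴' t' imply s ⊴ t; and (condition 3) s ∼ s' implies that φ'(s') implies φ(s), where ⊴ is a relation on S, ⊴' a relation on S', φ a predicate on S, and φ' a predicate on S'. Let I ⊆ S and f : S → ℕ satisfy: for all s, t' ∈ I and t with s → t and t ⊴ t', f(s) ≥ f(t'), and moreover f(s) > f(t') whenever φ(s). Define I' := {s' ∈ S' | ∃ s ∈ I, s ∼ s'} and f'(s') := inf {f(s) | s ∈ I ∧ s ∼ s'} (infimum in ℕ). Then for all s', r' ∈ I' and t' with s' →' t' and t' ⊴' r': f'(s') ≥ f'(r'), and moreover f'(s') > f'(r') whenever φ'(s'). -/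
/-- Transferring a restricted topological numbering along a
simulation: with `→` simulating `→'` via `∼`, conditions (2) and (3), and
`f` a restricted topological numbering for `→`, `⊴`, `I`, `φ`, the function
`f'(s') = inf {f s | s ∈ I ∧ s ∼ s'}` is a restricted topological numbering
for `→'`, `⊴'`, `I' = {s' | ∃ s ∈ I, s ∼ s'}`, `φ'`. -/
theorem numbering_transfer {S S' : Type*}
    (tr : S → S → Prop) (tr' : S' → S' → Prop)
    (sim : S → S' → Prop)
    (le : S → S → Prop) (le' : S' → S' → Prop)
    (φ : S → Prop) (φ' : S' → Prop)
    (hsim : ∀ s s' t', sim s s' → tr' s' t' → ∃ t, tr s t ∧ sim t t')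
    (hcond2 : ∀ s s' t t', sim s s' → sim t t' → le' s' t' → le s t)
    (hcond3 : ∀ s s', sim s s' → φ' s' → φ s)
    (I : Set S) (f : S → ℕ)
    (hf1 : ∀ s ∈ I, ∀ t' ∈ I, ∀ t, tr s t → le t t' → f s ≥ f t')
    (hf2 : ∀ s ∈ I, ∀ t' ∈ I, ∀ t, tr s t → le t t' → φ s → f s > f t') :
    (∀ s' ∈ {x : S' | ∃ s ∈ I, sim s x}, ∀ r' ∈ {x : S' | ∃ s ∈ I, sim s x},
      ∀ t', tr' s' t' → le' t' r' →
        sInf {n | ∃ s ∈ I, sim s s' ∧ f s = n} ≥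
          sInf {n | ∃ s ∈ I, sim s r' ∧ f s = n}) ∧
    (∀ s' ∈ {x : S' | ∃ s ∈ I, sim s x}, ∀ r' ∈ {x : S' | ∃ s ∈ I, sim s x},
      ∀ t', tr' s' t' → le' t' r' → φ' s' →
        sInf {n | ∃ s ∈ I, sim s s' ∧ f s = n} >
          sInf {n | ∃ s ∈ I, sim s r' ∧ f s = n}) := by
  -- Both infima are attained, at `s` and `r` say; the simulation lifts `s' →' t'` to `s → t`
  -- with `t ∼ t'`, and then `t ⊴ r`, so the inequalities for `f` at `s`, `r` apply.
  have key : ∀ s' ∈ {x : S' | ∃ s ∈ I, sim s x}, ∀ r' ∈ {x : S' | ∃ s ∈ I, sim s x},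
      ∀ t', tr' s' t' → le' t' r' → ∃ s ∈ I, ∃ r ∈ I, ∃ t, sim s s' ∧ tr s t ∧ le t r ∧
        f s = sInf {n | ∃ s ∈ I, sim s s' ∧ f s = n} ∧
        f r = sInf {n | ∃ s ∈ I, sim s r' ∧ f s = n} := by
    rintro s' ⟨s₀, hs₀, hs₀'⟩ r' ⟨r₀, hr₀, hr₀'⟩ t' htr hle
    obtain ⟨s, hs, hss', hfs⟩ :=
      Nat.sInf_mem (s := {n | ∃ s ∈ I, sim s s' ∧ f s = n}) ⟨f s₀, s₀, hs₀, hs₀', rfl⟩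
    obtain ⟨r, hr, hrr', hfr⟩ :=
      Nat.sInf_mem (s := {n | ∃ s ∈ I, sim s r' ∧ f s = n}) ⟨f r₀, r₀, hr₀, hr₀', rfl⟩
    obtain ⟨t, hst, htt'⟩ := hsim s s' t' hss' htr
    exact ⟨s, hs, r, hr, t, hss', hst, hcond2 t t' r r' htt' hrr' hle, hfs, hfr⟩
  constructor
  · intro s' hs' r' hr' t' htr hle
    obtain ⟨s, hs, r, hr, t, -, hst, htr', hfs, hfr⟩ := key s' hs' r' hr' t' htr hle
    rw [← hfs, ← hfr]
    exact hf1 s hs r hr t hst htr'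
  · intro s' hs' r' hr' t' htr hle hφ
    obtain ⟨s, hs, r, hr, t, hss', hst, htr', hfs, hfr⟩ := key s' hs' r' hr' t' htr hle
    rw [← hfs, ← hfr]
    exact hf2 s hs r hr t hst htr' (hcond3 s s' hss' hφ)
end

section
/- Let (S, →, ⪯) be a self-simulating transition system and φ a predicate compatible with the SSTS. Let C ⊆ S × ℤ be a finite set (a certificate) and s₀ ∈ S such that: (i) there exists (t₀, i₀) ∈ C with s₀ ⪯ t₀; and (ii) for every (s, i) ∈ C and every t with s → t, there exists (t', j) ∈ C with t ⪯ t', i ≥ j, and moreover i > j whenever φ(s). Then there is no Büchi run from s₀ in →, i.e., no infinite run s₀ → s₁ → ⋯ with φ(sᵢ) for infinitely many i. -/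
/-!
A run from `s₀` can be shadowed inside the certificate: whenever `s n ⪯ p.1` with `p ∈ C`,
self-simulation lifts the step `s n → s (n + 1)` to a step out of `p.1`, which the certificate
covers by some `q ∈ C` with `q.2 ≤ p.2`, strictly if `φ (s n)` (as then `φ p.1` by compatibility).
Along a Büchi run the topological numbers would therefore decrease strictly infinitely often without
ever increasing, which is impossible since the finite set `C` bounds them below.
-/

/-- correctness of the Büchi-Emptiness certificate checker:
Let `(S, →, ⪯)` be an SSTS and `φ` a compatible predicate. Let `C ⊆ S × ℤ`
be a finite certificate and `s₀ ∈ S` such that (i) some `(t₀, i₀) ∈ C` has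
`s₀ ⪯ t₀`, and (ii) for every `(s, i) ∈ C` and every `t` with `s → t` there
is `(t', j) ∈ C` with `t ⪯ t'`, `i ≥ j`, and `i > j` whenever `φ(s)`.
Then there is no Büchi run from `s₀` in `→`. -/
theorem buchi_emptiness_certificate {S : Type*}
    (tr : S → S → Prop) (pre : S → S → Prop)
    (hrefl : ∀ s, pre s s)
    (htrans : ∀ a b c, pre a b → pre b c → pre a c)
    (hsim : ∀ s s' t, pre s s' → tr s t → ∃ t', tr s' t' ∧ pre t t')
    (φ : S → Prop)
    (hcompat : ∀ s s', φ s → pre s s' → φ s')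
    (C : Set (S × ℤ)) (hCfin : C.Finite)
    (s₀ : S)
    (hinit : ∃ p ∈ C, pre s₀ p.1)
    (hcert : ∀ p ∈ C, ∀ t, tr p.1 t →
        ∃ q ∈ C, pre t q.1 ∧ p.2 ≥ q.2 ∧ (φ p.1 → p.2 > q.2)) :
    ¬ ∃ s : ℕ → S, s 0 = s₀ ∧ (∀ i, tr (s i) (s (i + 1))) ∧
        ∀ n, ∃ i ≥ n, φ (s i) := by
  rintro ⟨s, hs0, hrun, hinf⟩
  have hstep : ∀ n, ∀ p ∈ C, pre (s n) p.1 →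
      ∃ q ∈ C, pre (s (n + 1)) q.1 ∧ q.2 ≤ p.2 ∧ (φ (s n) → q.2 < p.2) := by
    intro n p hp hpre
    obtain ⟨t, ht, hst⟩ := hsim _ _ _ hpre (hrun n)
    obtain ⟨q, hq, htq, hle, hlt⟩ := hcert p hp t ht
    exact ⟨q, hq, htrans _ _ _ hst htq, hle, fun h => hlt (hcompat _ _ h hpre)⟩
  have hwalk : ∀ n m, n ≤ m → ∀ p ∈ C, pre (s n) p.1 →
      ∃ q ∈ C, pre (s m) q.1 ∧ q.2 ≤ p.2 := by
    intro n m hnm p hp hpre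
    induction m, hnm using Nat.le_induction with
    | base => exact ⟨p, hp, hpre, le_rfl⟩
    | succ m _ ih =>
      obtain ⟨q, hq, hmq, hle⟩ := ih
      obtain ⟨r, hr, hmr, hle', -⟩ := hstep m q hq hmq
      exact ⟨r, hr, hmr, hle'.trans hle⟩
  obtain ⟨p₀, hp₀, hpre₀⟩ := hinit
  have hdesc : ∀ k : ℕ, ∃ n, ∃ p ∈ C, pre (s n) p.1 ∧ p.2 + k ≤ p₀.2 := by
    intro k
    induction k with
    | zero => exact ⟨0, p₀, hp₀, hs0 ▸ hpre₀, by simp⟩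
    | succ k ih =>
      obtain ⟨n, p, hp, hpre, hk⟩ := ih
      obtain ⟨m, hnm, hφ⟩ := hinf n
      obtain ⟨q, hq, hmq, hle⟩ := hwalk n m hnm p hp hpre
      obtain ⟨r, hr, hmr, -, hlt⟩ := hstep m q hq hmq
      have := hlt hφ
      exact ⟨m + 1, r, hr, hmr, by push_cast; omega⟩
  obtain ⟨b, hb⟩ := (hCfin.image Prod.snd).bddBelow
  -- More than `p₀.2 - b` strict decreases lead below the lower bound `b`.
  obtain ⟨-, p, hp, -, hk⟩ := hdesc ((p₀.2 - b).toNat + 1)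
  have hbp : b ≤ p.2 := hb ⟨p, hp, rfl⟩
  push_cast at hk
  omega
end
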